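/- Let E be a lattice-normed module over a Stone algebra A. A subset M ⊆ E has property (CP) if and only if M is uniformly totally order-bounded, where M has property (CP) if for every real ε > 0 there is a finite set F ⊆ E with M ⊆ Z_F + B_E[0;ε·1], and Z_F := { Σ_{y∈F} λ_y y : λ ∈ A^F, |λ_y| ≤ 1 for all y ∈ F } is the A-zonotope determined by F. -/

import Mathlib

/-!
Both conditions are tested on the character space `X` of `A`. By Gelfand duality `A` is `C(X, ℂ)`,
its order is the pointwise one, and a finite infimum of real elements is the pointwise minimum;
so `inf_{y ∈ F} |x - y| ≤ c` says that at every character `φ` some `y ∈ F` satisfies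
`φ |x - y| ≤ c` (`LatticeNorm.infDistLE_iff`).

* From (CP) to total boundedness: `x = ∑ λ_y y + w` with `|λ_y| ≤ 1`. At a fixed character each
  `λ_y` is a point of the closed unit disc, hence within `δ` of a finite `δ`-net `t` of the disc.
  The finitely many combinations `∑ d_y y` with `d_y ∈ t` therefore approximate `x` at every
  character, with an error of at most `δ ∑ φ |y| + φ |w|`.
* Conversely, if at each character some `y ∈ F` has `φ |x - y| ≤ ε / 2`, then the functions
  `max (ε - |x - y|) 0`, divided by their sum, form a continuous partition of unity `(λ_y)`, and
  `|x - ∑ λ_y y| ≤ ∑ λ_y |x - y| ≤ ε`.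

The hypotheses on `A` do not contain the compatibility `star (c • a) = star c • star a`, on which
Gelfand duality depends. It follows from the order: see `star_algebraMap_I`.
-/

noncomputable section

open scoped Pointwise

section LNS

variable (A : Type*) [NormedCommRing A] [StarRing A] [CStarRing A]
  [NormedAlgebra ℂ A] [CompleteSpace A] [PartialOrder A] [StarOrderedRing A]

/-- A *Stone algebra*: a commutative unital C*-algebra which is order-complete. -/
class StoneAlgebra : Prop where
  exists_isGLB : ∀ S : Set A, S.Nonempty → BddBelow S → ∃ v, IsGLB S v

variable (E : Type*) [AddCommGroup E] [Module ℂ E]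

/-- A lattice norm on `E` with values in the positive cone of `A`. -/
structure LatticeNorm where
  val : E → A
  nonneg : ∀ x, 0 ≤ val x
  eq_zero_iff : ∀ x, val x = 0 ↔ x = 0
  val_smul : ∀ (c : ℂ) (x : E), val (c • x) = algebraMap ℂ A (‖c‖ : ℂ) * val x
  val_add_le : ∀ x y, val (x + y) ≤ val x + val y

variable {A E}

namespace LatticeNorm

variable (L : LatticeNorm A E)

/-- `inf_{y ∈ F} |x - y| ≤ u`: the infimum exists and is dominated by `u`. -/
def infDistLE (x : E) (F : Finset E) (u : A) : Prop :=
  ∃ v, IsGLB ((fun y => L.val (x - y)) '' (F : Set E)) v ∧ v ≤ u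

/-- A net in `A₊` decreasing to zero. -/
def DecrToZero {ι : Type} [Preorder ι] (u : ι → A) : Prop :=
  (∀ i, 0 ≤ u i) ∧ Antitone u ∧ IsGLB (Set.range u) 0

/-- `M` is totally order-bounded. -/
def TotallyOrderBounded (M : Set E) : Prop :=
  ∃ (ι : Type) (_ : Preorder ι) (_ : IsDirected ι (· ≤ ·)) (_ : Nonempty ι) (u : ι → A),
    DecrToZero (A := A) u ∧
    ∀ i, ∃ F : Finset E, F.Nonempty ∧ ∀ x ∈ M, L.infDistLE x F (u i)

/-- `M` is uniformly totally order-bounded. -/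
def UnifTotallyOrderBounded (M : Set E) : Prop :=
  ∀ ε : ℝ, 0 < ε → ∃ F : Finset E, F.Nonempty ∧ ∀ x ∈ M,
    L.infDistLE x F (algebraMap ℂ A (ε : ℂ))

/-- `M` is order-bounded. -/
def OrderBounded (M : Set E) : Prop :=
  ∃ f : A, 0 ≤ f ∧ ∀ x ∈ M, L.val x ≤ f

/-- Order convergence of a net in `E`. -/
def OrderConv {ι : Type} [Preorder ι] (x : ι → E) (x₀ : E) : Prop :=
  ∃ (κ : Type) (_ : Preorder κ) (_ : IsDirected κ (· ≤ ·)) (_ : Nonempty κ) (u : κ → A),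
    DecrToZero (A := A) u ∧ ∀ k, ∃ i₀, ∀ i ≥ i₀, L.val (x i - x₀) ≤ u k

/-- A set is order-closed if it contains all order-limits of nets with terms in it. -/
def OrderClosed (S : Set E) : Prop :=
  ∀ (ι : Type) (_ : Preorder ι) (_ : IsDirected ι (· ≤ ·)) (_ : Nonempty ι)
    (x : ι → E) (x₀ : E), (∀ i, x i ∈ S) → L.OrderConv x x₀ → x₀ ∈ S

/-- The order-closure: the smallest order-closed set containing `M`. -/
def ocl (M : Set E) : Set E :=
  ⋂₀ { S : Set E | M ⊆ S ∧ L.OrderClosed S }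

end LatticeNorm

end LNS
/-- `L` is the lattice norm of a lattice-normed *module* over `A`: `|a • x| = |a| |x|`,
where the modulus `|a|` is characterized as the positive square root `b` of `star a * a`. -/
def LatticeNorm.IsModuleNorm {A : Type*} [NormedCommRing A] [StarRing A] [CStarRing A]
    [NormedAlgebra ℂ A] [CompleteSpace A] [PartialOrder A] [StarOrderedRing A]
    {E : Type*} [AddCommGroup E] [Module ℂ E] [Module A E]
    (L : LatticeNorm A E) : Prop :=
  ∀ (a : A) (x : E) (b : A), 0 ≤ b → b * b = star a * a → L.val (a • x) = b * L.val x
/-- The `A`-zonotope determined by a finite set `F ⊆ E`: all sums `∑_{y ∈ F} λ_y • y`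
with coefficients `λ_y ∈ A` of modulus at most `1` (the modulus `|λ_y|` being
characterized as the positive square root of `star λ_y * λ_y`). -/
def LatticeNorm.zonotope {A : Type*} [NormedCommRing A] [StarRing A] [CStarRing A]
    [NormedAlgebra ℂ A] [CompleteSpace A] [PartialOrder A] [StarOrderedRing A]
    {E : Type*} [AddCommGroup E] [Module ℂ E] [Module A E]
    (_L : LatticeNorm A E) (F : Finset E) : Set E :=
  { z : E | ∃ lam : E → A,
      (∀ y ∈ F, ∃ b : A, 0 ≤ b ∧ b * b = star (lam y) * lam y ∧ b ≤ 1) ∧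
      z = ∑ y ∈ F, lam y • y }

/-- `M` has property (CP): for every `ε > 0` it is contained in a zonotope plus the
ball of radius `ε·1`. -/
def LatticeNorm.PropertyCP {A : Type*} [NormedCommRing A] [StarRing A] [CStarRing A]
    [NormedAlgebra ℂ A] [CompleteSpace A] [PartialOrder A] [StarOrderedRing A]
    {E : Type*} [AddCommGroup E] [Module ℂ E] [Module A E]
    (L : LatticeNorm A E) (M : Set E) : Prop :=
  ∀ ε : ℝ, 0 < ε → ∃ F : Finset E,
    M ⊆ L.zonotope F + { w : E | L.val w ≤ algebraMap ℂ A (ε : ℂ) }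

open WeakDual

/-! ### Gelfand duality and the pointwise order -/

section Gelfand

variable {A : Type*} [NormedCommRing A] [StarRing A] [CStarRing A] [NormedAlgebra ℂ A]
  [CompleteSpace A]

omit [CompleteSpace A] in
theorem star_algebraMap_ofReal (r : ℝ) :
    star (algebraMap ℂ A (r : ℂ)) = algebraMap ℂ A (r : ℂ) := by
  have hc : Continuous (starAddEquiv : A ≃+ A) := continuous_star
  have h := map_real_smul (starAddEquiv : A ≃+ A) hc r 1
  simp only [starAddEquiv_apply, star_one] at h
  have e : (algebraMap ℂ A (r : ℂ)) = r • (1 : A) := by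
    rw [Algebra.algebraMap_eq_smul_one]; rfl
  rw [e, h]

omit [CompleteSpace A] in
/-- The order being antisymmetric rules out that the involution is complex-linear on a nonzero
corner: with `i := algebraMap I`, the element `p = (1 - i * star i) / 2` is a self-adjoint
idempotent on which `star i = i`, so both `p` and `-p` are of the form `star s * s`. -/
theorem star_algebraMap_I [PartialOrder A] [StarOrderedRing A] :
    star (algebraMap ℂ A Complex.I) = -algebraMap ℂ A Complex.I := by
  set i := algebraMap ℂ A Complex.I with hi
  set h := algebraMap ℂ A ((1 / 2 : ℝ) : ℂ) with hh
  have hii : i * i = -1 := by rw [hi, ← map_mul, Complex.I_mul_I, map_neg, map_one]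
  have hjj : star i * star i = -1 := by rw [← star_mul, hii, star_neg, star_one]
  have hs : star h = h := star_algebraMap_ofReal _
  have h2 : h + h = 1 := by
    rw [hh, ← map_add, ← map_one (algebraMap ℂ A)]; congr 1; push_cast; norm_num
  set p := h * (1 - i * star i) with hp
  have hps : star p = p := by
    rw [hp]; simp only [star_mul, star_sub, star_one, star_star, hs]; ring
  have hpp : p * p = p := by
    have : p * p = h * (h * (1 - 2 * (i * star i) + (i * i) * (star i * star i))) := by
      rw [hp]; ring
    rw [this, hii, hjj, hp]
    linear_combination h * (1 - i * star i) * h2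
  have hip : star i * p = i * p := by
    rw [hp]
    linear_combination (-h * i) * hjj + (h * star i) * hii
  have h1 : 0 ≤ p := by
    have := star_mul_self_nonneg p
    rwa [hps, hpp] at this
  have h3 : 0 ≤ -p := by
    have := star_mul_self_nonneg (i * p)
    have e : star (i * p) * (i * p) = -p := by
      rw [star_mul, hps]
      linear_combination (i * p) * hip + p * p * hii - hpp
    rwa [e] at this
  have h0 : p = 0 := le_antisymm (neg_nonneg.mp h3) h1
  rw [hp] at h0
  linear_combination (2 * i) * h0 - (i - i * i * star i) * h2 + star i * hii

/-- Together with the given instances this makes `A` a `CommCStarAlgebra`. -/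
theorem starModule_complex [PartialOrder A] [StarOrderedRing A] : StarModule ℂ A where
  star_smul c a := by
    have hc : star (algebraMap ℂ A c) = algebraMap ℂ A (star c) := by
      have e : c = (c.re : ℂ) + (c.im : ℂ) * Complex.I := (Complex.re_add_im c).symm
      have e' : star c = (c.re : ℂ) - (c.im : ℂ) * Complex.I := by
        apply Complex.ext <;> simp
      rw [e']
      conv_lhs => rw [e]
      simp only [map_add, map_sub, map_mul, star_add, star_mul, star_algebraMap_ofReal,
        star_algebraMap_I]
      ring
    rw [Algebra.smul_def, Algebra.smul_def, star_mul, hc, mul_comm]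

variable [PartialOrder A] [StarOrderedRing A]

theorem char_star (φ : characterSpace ℂ A) (a : A) : φ (star a) = star (φ a) := by
  let _ : StarModule ℂ A := starModule_complex
  let _ : CommCStarAlgebra A := { }
  exact map_star φ a

theorem char_bijective : Function.Bijective (gelfandTransform ℂ A) := by
  let _ : StarModule ℂ A := starModule_complex
  let _ : CommCStarAlgebra A := { }
  exact gelfandTransform_bijective A

theorem char_ext {a b : A} (h : ∀ φ : characterSpace ℂ A, φ a = φ b) : a = b :=
  char_bijective.1 (ContinuousMap.ext h)

/-- Every continuous real function on the character space is the Gelfand transform of some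
element of `A`. -/
theorem exists_char_eq (f : characterSpace ℂ A → ℝ) (hf : Continuous f) :
    ∃ a : A, ∀ φ : characterSpace ℂ A, φ a = (f φ : ℂ) := by
  obtain ⟨a, ha⟩ := char_bijective (A := A).2
    ⟨fun φ => (f φ : ℂ), Complex.continuous_ofReal.comp hf⟩
  exact ⟨a, fun φ => congrArg (fun g : C(characterSpace ℂ A, ℂ) => g φ) ha⟩

omit [StarRing A] [CStarRing A] [CompleteSpace A] [PartialOrder A] [StarOrderedRing A] in
theorem char_continuous (a : A) : Continuous fun φ : characterSpace ℂ A => φ a :=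
  (gelfandTransform ℂ A a).continuous

open scoped ComplexOrder in
theorem char_nonneg {a : A} (ha : 0 ≤ a) (φ : characterSpace ℂ A) : 0 ≤ φ a := by
  rw [StarOrderedRing.nonneg_iff] at ha
  induction ha using AddSubmonoid.closure_induction with
  | mem x hx =>
    obtain ⟨s, rfl⟩ := hx
    simp only [map_mul, char_star]
    exact star_mul_self_nonneg _
  | zero => simp
  | add x y _ _ hx hy => rw [map_add]; exact add_nonneg hx hy

theorem char_re {a : A} (ha : 0 ≤ a) (φ : characterSpace ℂ A) : φ a = ((φ a).re : ℂ) :=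
  Complex.ext rfl (Complex.nonneg_iff.1 (char_nonneg ha φ)).2.symm

theorem char_re_nonneg {a : A} (ha : 0 ≤ a) (φ : characterSpace ℂ A) : 0 ≤ (φ a).re :=
  (Complex.nonneg_iff.1 (char_nonneg ha φ)).1

/-- An element with nonnegative Gelfand transform `f` is `star s * s`, where `s` has Gelfand
transform `√f`. -/
theorem nonneg_of_char {a : A} (f : characterSpace ℂ A → ℝ) (h : ∀ φ, φ a = (f φ : ℂ))
    (h0 : ∀ φ, 0 ≤ f φ) : 0 ≤ a := by
  have hf : Continuous f := by
    have := Complex.continuous_re.comp (char_continuous a)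
    refine this.congr fun φ => ?_
    simp [h]
  obtain ⟨s, hs⟩ := exists_char_eq (fun φ => √(f φ)) (hf.sqrt)
  have : a = star s * s := char_ext fun φ => by
    rw [map_mul, char_star, hs, h, Complex.star_def, Complex.conj_ofReal, ← Complex.ofReal_mul,
      Real.mul_self_sqrt (h0 φ)]
  rw [this]
  exact star_mul_self_nonneg s

/-- For elements with real Gelfand transform, the order of `A` is the pointwise order of the
transforms. -/
theorem le_iff_char {a b : A} (ha : ∀ φ : characterSpace ℂ A, φ a = ((φ a).re : ℂ))
    (hb : ∀ φ : characterSpace ℂ A, φ b = ((φ b).re : ℂ)) :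
    a ≤ b ↔ ∀ φ : characterSpace ℂ A, (φ a).re ≤ (φ b).re := by
  constructor
  · intro h φ
    have := char_re_nonneg (sub_nonneg.2 h) φ
    rwa [map_sub, Complex.sub_re, sub_nonneg] at this
  · intro h
    refine sub_nonneg.1 (nonneg_of_char (fun φ => (φ b).re - (φ a).re) (fun φ => ?_)
      fun φ => sub_nonneg.2 (h φ))
    rw [map_sub, ha, hb]
    simp

omit [StarRing A] [CStarRing A] [CompleteSpace A] [PartialOrder A] [StarOrderedRing A] in
theorem char_algebraMap (φ : characterSpace ℂ A) (c : ℂ) : φ (algebraMap ℂ A c) = c := by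
  rw [AlgHomClass.commutes]; rfl

/-- The modulus of `a`: its Gelfand transform is the pointwise absolute value. -/
theorem exists_modulus (a : A) : ∃ b : A, 0 ≤ b ∧ b * b = star a * a ∧
    ∀ φ : characterSpace ℂ A, φ b = (‖φ a‖ : ℂ) := by
  obtain ⟨b, hb⟩ := exists_char_eq (fun φ => ‖φ a‖) (char_continuous a).norm
  refine ⟨b, nonneg_of_char _ hb fun φ => norm_nonneg _, char_ext fun φ => ?_, hb⟩
  rw [map_mul, map_mul, hb, char_star, Complex.star_def, Complex.conj_mul', sq]

end Gelfand

/-! ### Lattice norms evaluated at characters -/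

namespace LatticeNorm

variable {A : Type*} [NormedCommRing A] [StarRing A] [CStarRing A] [NormedAlgebra ℂ A]
  [CompleteSpace A] [PartialOrder A] [StarOrderedRing A]
  {E : Type*} [AddCommGroup E] [Module ℂ E]

/-- The Gelfand transform of the lattice norm: the real number `φ |x|` (as a
function of `x`, a seminorm). The real part loses nothing, because `|x| ≥ 0`. -/
def charNorm (L : LatticeNorm A E) (φ : characterSpace ℂ A) (x : E) : ℝ := (φ (L.val x)).re

variable (L : LatticeNorm A E)

theorem char_val (φ : characterSpace ℂ A) (x : E) : φ (L.val x) = (L.charNorm φ x : ℂ) :=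
  char_re (L.nonneg x) φ

theorem charNorm_nonneg (φ : characterSpace ℂ A) (x : E) : 0 ≤ L.charNorm φ x :=
  char_re_nonneg (L.nonneg x) φ

omit [StarRing A] [CStarRing A] [CompleteSpace A] [StarOrderedRing A] in
theorem charNorm_continuous (x : E) : Continuous fun φ => L.charNorm φ x :=
  Complex.continuous_re.comp (char_continuous _)

omit [StarRing A] [CStarRing A] [CompleteSpace A] [StarOrderedRing A] in
theorem charNorm_zero (φ : characterSpace ℂ A) : L.charNorm φ 0 = 0 := by
  rw [charNorm, (L.eq_zero_iff 0).2 rfl, map_zero, Complex.zero_re]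

theorem charNorm_add_le (φ : characterSpace ℂ A) (x y : E) :
    L.charNorm φ (x + y) ≤ L.charNorm φ x + L.charNorm φ y := by
  have := char_re_nonneg (sub_nonneg.2 (L.val_add_le x y)) φ
  rw [map_sub, map_add, Complex.sub_re, Complex.add_re] at this
  simp only [charNorm]
  linarith

theorem charNorm_sum_le (φ : characterSpace ℂ A) {ι : Type*} (s : Finset ι) (f : ι → E) :
    L.charNorm φ (∑ i ∈ s, f i) ≤ ∑ i ∈ s, L.charNorm φ (f i) :=
  Finset.le_sum_of_subadditive _ (L.charNorm_zero φ).le (L.charNorm_add_le φ) s f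

omit [StarRing A] [CStarRing A] [StarOrderedRing A] in
theorem charNorm_le_norm (φ : characterSpace ℂ A) (x : E) : L.charNorm φ x ≤ ‖L.val x‖ * ‖(1 : A)‖ :=
  (Complex.re_le_norm _).trans (AlgHom.norm_apply_le_self_mul_norm_one φ _)

theorem val_le_iff (x : E) (c : ℝ) :
    L.val x ≤ algebraMap ℂ A (c : ℂ) ↔ ∀ φ, L.charNorm φ x ≤ c := by
  rw [le_iff_char (fun φ => char_re (L.nonneg x) φ) (fun φ => by simp [char_algebraMap])]
  simp [char_algebraMap, charNorm]

theorem charNorm_smul [Module A E] (hL : L.IsModuleNorm) (φ : characterSpace ℂ A) (a : A) (x : E) :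
    L.charNorm φ (a • x) = ‖φ a‖ * L.charNorm φ x := by
  obtain ⟨b, hb0, hb, hbφ⟩ := exists_modulus a
  rw [charNorm, hL a x b hb0 hb, map_mul, hbφ, L.char_val, ← Complex.ofReal_mul, Complex.ofReal_re]

/-- Infima of finite families of real elements of `A` are computed pointwise on the character
space. -/
theorem infDistLE_iff (x : E) (F : Finset E) (hF : F.Nonempty) (c : ℝ) :
    L.infDistLE x F (algebraMap ℂ A (c : ℂ)) ↔ ∀ φ, ∃ y ∈ F, L.charNorm φ (x - y) ≤ c := by
  obtain ⟨m, hm⟩ := exists_char_eq (A := A) (fun φ => F.inf' hF fun y => L.charNorm φ (x - y))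
    (Continuous.finset_inf'_apply hF fun y _ => L.charNorm_continuous (x - y))
  have hmre : ∀ φ : characterSpace ℂ A, φ m = ((φ m).re : ℂ) := fun φ => by simp [hm]
  have hm0 : 0 ≤ m := nonneg_of_char _ hm fun φ =>
    Finset.le_inf' hF _ fun y _ => L.charNorm_nonneg φ (x - y)
  have hglb : IsGLB ((fun y => L.val (x - y)) '' (F : Set E)) m := by
    constructor
    · rintro _ ⟨y, hy, rfl⟩
      rw [le_iff_char hmre fun φ => char_re (L.nonneg _) φ]
      intro φ
      rw [hm, Complex.ofReal_re]
      exact Finset.inf'_le _ hy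
    · intro w hw
      -- A lower bound differs from a positive element by a positive one, hence is real.
      have hwre : ∀ φ : characterSpace ℂ A, φ w = ((φ w).re : ℂ) := fun φ => by
        obtain ⟨y, hy⟩ := hF
        have h1 := char_re (sub_nonneg.2 (hw ⟨y, hy, rfl⟩)) φ
        have h2 := char_re (L.nonneg (x - y)) φ
        rw [map_sub, Complex.sub_re, Complex.ofReal_sub, ← h2] at h1
        exact sub_right_injective h1
      rw [le_iff_char hwre hmre]
      intro φ
      rw [hm, Complex.ofReal_re]
      refine Finset.le_inf' hF _ fun y hy => ?_
      exact (le_iff_char hwre fun φ => char_re (L.nonneg _) φ).1 (hw ⟨y, hy, rfl⟩) φ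
  have hcm : m ≤ algebraMap ℂ A (c : ℂ) ↔ ∀ φ, ∃ y ∈ F, L.charNorm φ (x - y) ≤ c := by
    rw [le_iff_char hmre (fun φ => by simp [char_algebraMap])]
    simp [char_algebraMap, hm, Finset.inf'_le_iff]
  rw [← hcm]
  constructor
  · rintro ⟨v, hv, hvc⟩
    rwa [hglb.unique hv]
  · exact fun h => ⟨m, hglb, h⟩

/-- A finite subset of the closed unit disc replaces arbitrary coefficients of a zonotope: at each
character the coefficients are complex numbers in the disc, and can be rounded. -/
theorem unifTotallyOrderBounded_of_propertyCP [Module A E] (hL : L.IsModuleNorm) {M : Set E}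
    (h : L.PropertyCP M) : L.UnifTotallyOrderBounded M := by
  classical
  intro ε hε
  obtain ⟨F, hF⟩ := h (ε / 2) (by linarith)
  set K : ℝ := ∑ y ∈ F, ‖L.val y‖ * ‖(1 : A)‖ with hK
  have hK0 : 0 ≤ K := Finset.sum_nonneg fun y _ => by positivity
  obtain ⟨δ, hδ, hδK⟩ : ∃ δ : ℝ, 0 < δ ∧ δ * K ≤ ε / 2 :=
    ⟨ε / 2 / (K + 1), by positivity, by
      rw [div_mul_eq_mul_div, div_le_iff₀ (by positivity)]; nlinarith⟩
  obtain ⟨t, -, htfin, ht⟩ := (isCompact_closedBall (0 : ℂ) 1).finite_cover_balls hδ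
  lift t to Finset ℂ using htfin
  have ht' : ∀ z : ℂ, ‖z‖ ≤ 1 → ∃ d ∈ t, ‖z - d‖ ≤ δ := fun z hz => by
    have := ht (mem_closedBall_zero_iff.2 hz)
    simp only [Set.mem_iUnion, mem_ball_iff_norm] at this
    obtain ⟨d, hd, hzd⟩ := this
    exact ⟨d, hd, hzd.le⟩
  let g : (F → ℂ) → E := fun d => ∑ y : F, algebraMap ℂ A (d y) • (y : E)
  have hG : ((Fintype.piFinset fun _ : F => t).image g).Nonempty := by
    obtain ⟨d, hd, -⟩ := ht' 0 (by simp)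
    exact ⟨g fun _ => d, Finset.mem_image_of_mem g (Fintype.mem_piFinset.2 fun _ => hd)⟩
  refine ⟨_, hG, fun x hx => (L.infDistLE_iff x _ hG ε).2 fun φ => ?_⟩
  obtain ⟨z, ⟨lam, hlam, rfl⟩, w, hw, rfl⟩ := hF hx
  have hlam1 : ∀ y : F, ‖φ (lam y)‖ ≤ 1 := fun y => by
    obtain ⟨b, hb0, hb, hb1⟩ := hlam y y.2
    have h1 := char_re_nonneg (sub_nonneg.2 hb1) φ
    have h2 := char_re_nonneg hb0 φ
    have h3 := congrArg φ hb
    rw [map_mul, map_mul, char_star, Complex.star_def, Complex.conj_mul', char_re hb0 φ] at h3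
    norm_cast at h3
    rw [map_sub, Complex.sub_re, map_one, Complex.one_re] at h1
    nlinarith [norm_nonneg (φ (lam y))]
  choose d hdt hd using fun y : F => ht' _ (hlam1 y)
  refine ⟨g d, Finset.mem_image_of_mem g (Fintype.mem_piFinset.2 hdt), ?_⟩
  have e : (∑ y ∈ F, lam y • y + w) - g d =
      (∑ y : F, (lam y - algebraMap ℂ A (d y)) • (y : E)) + w := by
    simp only [g, sub_smul, Finset.sum_sub_distrib]
    rw [Finset.sum_coe_sort F fun y => lam y • y]
    abel
  have hsum : L.charNorm φ (∑ y : F, (lam y - algebraMap ℂ A (d y)) • (y : E)) ≤ δ * K := by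
    refine (L.charNorm_sum_le φ _ _).trans ?_
    rw [hK, ← Finset.sum_coe_sort F, Finset.mul_sum]
    refine Finset.sum_le_sum fun y _ => ?_
    rw [L.charNorm_smul hL, map_sub, char_algebraMap]
    exact mul_le_mul (hd y) (L.charNorm_le_norm φ y) (L.charNorm_nonneg φ y) hδ.le
  have hw' := (L.val_le_iff w (ε / 2)).1 hw φ
  change L.charNorm φ ((∑ y ∈ F, lam y • y + w) - g d) ≤ ε
  rw [e]
  linarith [L.charNorm_add_le φ (∑ y : F, (lam y - algebraMap ℂ A (d y)) • (y : E)) w]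

/-- A continuous partition of unity on the character space, with the `y`-th function supported
where `|x - y| < ε`, turns the pointwise approximation of `x` by elements of `F` into an
approximation by a single element of the zonotope. -/
theorem propertyCP_of_unifTotallyOrderBounded [Module A E] (hL : L.IsModuleNorm) {M : Set E}
    (h : L.UnifTotallyOrderBounded M) : L.PropertyCP M := by
  intro ε hε
  obtain ⟨F, hFne, hF⟩ := h (ε / 2) (by linarith)
  refine ⟨F, fun x hx => ?_⟩
  have hx' := (L.infDistLE_iff x F hFne (ε / 2)).1 (hF x hx)
  let g : E → characterSpace ℂ A → ℝ := fun y φ => max (ε - L.charNorm φ (x - y)) 0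
  have hg0 : ∀ y φ, 0 ≤ g y φ := fun y φ => le_max_right _ _
  have hgc : ∀ y, Continuous (g y) := fun y =>
    (continuous_const.sub (L.charNorm_continuous (x - y))).max continuous_const
  have hgd : ∀ y φ, g y φ * L.charNorm φ (x - y) ≤ g y φ * ε := fun y φ => by
    rcases le_total (ε - L.charNorm φ (x - y)) 0 with h | h
    · simp [g, max_eq_right h]
    · exact mul_le_mul_of_nonneg_left (by linarith) (hg0 y φ)
  have hS : ∀ φ, 0 < ∑ y ∈ F, g y φ := fun φ => by
    obtain ⟨y, hy, hyε⟩ := hx' φ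
    exact Finset.sum_pos' (fun y _ => hg0 y φ) ⟨y, hy, lt_max_of_lt_left (by linarith)⟩
  choose lam hlam using fun y => exists_char_eq (A := A) (fun φ => g y φ / ∑ y ∈ F, g y φ)
    ((hgc y).div (continuous_finsetSum _ fun y _ => hgc y) fun φ => (hS φ).ne')
  have hlam0 : ∀ y, 0 ≤ lam y := fun y =>
    nonneg_of_char _ (hlam y) fun φ => div_nonneg (hg0 y φ) (hS φ).le
  have hlam1 : ∑ y ∈ F, lam y = 1 := char_ext fun φ => by
    rw [map_sum, map_one]
    simp only [hlam]
    rw [← Complex.ofReal_sum, ← Finset.sum_div, div_self (hS φ).ne', Complex.ofReal_one]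
  refine ⟨∑ y ∈ F, lam y • y, ⟨lam, fun y hy => ⟨lam y, hlam0 y, ?_, ?_⟩, rfl⟩,
    x - ∑ y ∈ F, lam y • y, ?_, by simp⟩
  · congr 1
    exact char_ext fun φ => by rw [char_star, hlam, Complex.star_def, Complex.conj_ofReal]
  · exact hlam1 ▸ Finset.single_le_sum (fun z _ => hlam0 z) hy
  · refine (L.val_le_iff _ ε).2 fun φ => ?_
    have e : x - ∑ y ∈ F, lam y • y = ∑ y ∈ F, lam y • (x - y) := by
      simp only [smul_sub, Finset.sum_sub_distrib]
      rw [← Finset.sum_smul, hlam1, one_smul]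
    rw [e]
    calc L.charNorm φ (∑ y ∈ F, lam y • (x - y))
        ≤ ∑ y ∈ F, L.charNorm φ (lam y • (x - y)) := L.charNorm_sum_le φ _ _
      _ ≤ ∑ y ∈ F, g y φ * ε / ∑ y ∈ F, g y φ := by
          refine Finset.sum_le_sum fun y _ => ?_
          rw [L.charNorm_smul hL, hlam, Complex.norm_real, Real.norm_eq_abs,
            abs_of_nonneg (div_nonneg (hg0 y φ) (hS φ).le), div_mul_eq_mul_div]
          exact div_le_div_of_nonneg_right (hgd y φ) (hS φ).le
      _ = ε := by
          rw [← Finset.sum_div, ← Finset.sum_mul, mul_div_assoc,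
            mul_div_cancel₀ _ (hS φ).ne']

end LatticeNorm

/-- In a lattice-normed module over a Stone algebra, a subset has
property (CP) if and only if it is uniformly totally order-bounded. -/
theorem propertyCP_iff_unifTotallyOrderBounded
    {A : Type*} [NormedCommRing A] [StarRing A] [CStarRing A] [NormedAlgebra ℂ A]
    [CompleteSpace A] [PartialOrder A] [StarOrderedRing A] [StoneAlgebra A]
    {E : Type*} [AddCommGroup E] [Module ℂ E] [Module A E] [IsScalarTower ℂ A E]
    (L : LatticeNorm A E) (hLmod : L.IsModuleNorm) (M : Set E) :
    L.PropertyCP M ↔ L.UnifTotallyOrderBounded M := by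
  exact ⟨L.unifTotallyOrderBounded_of_propertyCP hLmod,
    L.propertyCP_of_unifTotallyOrderBounded hLmod⟩
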